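/- Let K be an algebraically closed field of characteristic zero and let M = [[1, a, d, b], [0, t, 0, c], [0, 0, 1, e], [0, 0, 0, 1]] be a matrix with t ∈ K∖{0} and a, b, c, d, e ∈ K. If M is diagonalizable (conjugate in GL₄(K) to a diagonal matrix), then d = 0 and e = 0. -/

import Mathlib

/-!
A diagonalizable matrix `A` over a reduced commutative ring has no Jordan chain of length two: if
`A y = μ y` and `A x = μ x + y`, then `y = 0`, since in diagonalizing coordinates these equations
give `yᵢ² = 0` for all `i`. In the standard basis, `M` sends `e₀ ↦ e₀` and `e₂ ↦ e₂ + d • e₀`,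
while `Mᵀ` sends `e₃ ↦ e₃` and `e₂ ↦ e₂ + e • e₃`; hence `d = 0` and `e = 0`.
-/

open Matrix

section

variable {n R : Type*} [Fintype n] [DecidableEq n] [CommRing R]

/-- A square matrix is diagonalizable if it is conjugate, by an invertible matrix over the same
ring, to a diagonal matrix. -/
def IsDiagonalizable (A : Matrix n n R) : Prop :=
  ∃ P : (Matrix n n R)ˣ, ∃ v : n → R,
    A = (P : Matrix n n R) * diagonal v * ((P⁻¹ : (Matrix n n R)ˣ) : Matrix n n R)

theorem IsDiagonalizable.transpose {A : Matrix n n R} (hA : IsDiagonalizable A) :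
    IsDiagonalizable Aᵀ := by
  obtain ⟨P, v, rfl⟩ := hA
  let Q : (Matrix n n R)ˣ :=
    { val := P⁻¹.valᵀ
      inv := P.valᵀ
      val_inv := by rw [← transpose_mul, P.mul_inv, transpose_one]
      inv_val := by rw [← transpose_mul, P.inv_mul, transpose_one] }
  refine ⟨Q, v, ?_⟩
  change (P.val * diagonal v * P⁻¹.val)ᵀ = P⁻¹.valᵀ * diagonal v * P.valᵀ
  rw [transpose_mul, transpose_mul, diagonal_transpose, mul_assoc]

theorem eq_zero_of_diagonal_mulVec_eq_smul_add [IsReduced R] {v x y : n → R} {μ : R}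
    (hy : diagonal v *ᵥ y = μ • y) (hx : diagonal v *ᵥ x = μ • x + y) : y = 0 := by
  funext i
  have hyi : v i * y i = μ * y i := by simpa [mulVec_diagonal] using congrFun hy i
  have hxi : v i * x i = μ * x i + y i := by simpa [mulVec_diagonal] using congrFun hx i
  have hsq : y i ^ 2 = 0 := by linear_combination x i * hyi - y i * hxi
  exact eq_zero_of_pow_eq_zero hsq

theorem IsDiagonalizable.eq_zero_of_mulVec_eq_smul_add [IsReduced R] {A : Matrix n n R}
    (hA : IsDiagonalizable A) {x y : n → R} {μ : R}
    (hy : A *ᵥ y = μ • y) (hx : A *ᵥ x = μ • x + y) : y = 0 := by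
  obtain ⟨P, v, rfl⟩ := hA
  have hconj (z : n → R) : diagonal v *ᵥ (P⁻¹.val *ᵥ z) =
      P⁻¹.val *ᵥ ((P.val * diagonal v * P⁻¹.val) *ᵥ z) := by
    simp only [mulVec_mulVec, mul_assoc, Units.inv_mul_cancel_left]
  have hzero : P⁻¹.val *ᵥ y = 0 := by
    apply eq_zero_of_diagonal_mulVec_eq_smul_add (v := v) (x := P⁻¹.val *ᵥ x) (μ := μ)
    · rw [hconj, hy, mulVec_smul]
    · rw [hconj, hx, mulVec_add, mulVec_smul]
  calc
    y = P.val *ᵥ (P⁻¹.val *ᵥ y) := by rw [mulVec_mulVec, P.mul_inv, one_mulVec]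
    _ = 0 := by rw [hzero, mulVec_zero]

theorem stmt9_general [IsReduced R] {t a b c d e : R}
    (hM : IsDiagonalizable !![1, a, d, b; 0, t, 0, c; 0, 0, 1, e; 0, 0, 0, 1]) :
    d = 0 ∧ e = 0 := by
  have hcol : (![d, 0, 0, 0] : Fin 4 → R) = 0 := by
    apply hM.eq_zero_of_mulVec_eq_smul_add (x := ![0, 0, 1, 0]) (μ := 1) <;>
      ext i <;> fin_cases i <;> simp [mulVec, dotProduct, Fin.sum_univ_four]
  have hrow : (![0, 0, 0, e] : Fin 4 → R) = 0 := by
    apply hM.transpose.eq_zero_of_mulVec_eq_smul_add (x := ![0, 0, 1, 0]) (μ := 1) <;>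
      ext i <;> fin_cases i <;> simp [mulVec, dotProduct, Fin.sum_univ_four]
  exact ⟨congrFun hcol 0, congrFun hrow 3⟩

end

/-- If a matrix `[[1, a, d, b], [0, t, 0, c], [0, 0, 1, e], [0, 0, 0, 1]]` with `t ≠ 0`
over an algebraically closed field of characteristic zero is diagonalizable (conjugate in
`GL₄(K)` to a diagonal matrix), then `d = 0` and `e = 0`. -/
theorem stmt9 (K : Type*) [Field K] [IsAlgClosed K] [CharZero K]
    (t a b c d e : K) (ht : t ≠ 0)
    (hdiag : ∃ P : (Matrix (Fin 4) (Fin 4) K)ˣ, ∃ dv : Fin 4 → K,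
      !![1, a, d, b; 0, t, 0, c; 0, 0, 1, e; 0, 0, 0, 1] =
        (P : Matrix (Fin 4) (Fin 4) K) * Matrix.diagonal dv *
          ((P⁻¹ : (Matrix (Fin 4) (Fin 4) K)ˣ) : Matrix (Fin 4) (Fin 4) K)) :
    d = 0 ∧ e = 0 :=
  stmt9_general hdiag
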